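/- arXiv:2201.05693 — 2 statements merged into one kernel-verified Lean document; each statement's English description precedes it below -/
import Mathlib

section
/- For every z ∈ ℝ with det(z·I − J^D_cs) ≠ 0, the Schur complement of J_cs with respect to the boundary/interior decomposition satisfies z·I₂ − b(0)·I₂ − X̄0·(z·I − J^D_cs)^{−1}·X0 = φ(z)·( R(z)·I₂ − Δ₀ ), where Δ₀ is the 2×2 matrix with rows (1,−1) and (−1,1). -/
open Polynomial

/-- The `(n0+1) × (n0+1)` centrosymmetric tridiagonal Jacobi matrix. -/
noncomputable def Jcs (n0 : ℕ) (a b : ℕ → ℝ) :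
    Matrix (Fin (n0 + 1)) (Fin (n0 + 1)) ℝ :=
  Matrix.of fun i j =>
    if (j : ℕ) = (i : ℕ) then b (i : ℕ)
    else if (j : ℕ) = (i : ℕ) + 1 then a ((i : ℕ) + 1)
    else if (i : ℕ) = (j : ℕ) + 1 then a (n0 - (j : ℕ))
    else 0

/-- The `(n0−1) × (n0−1)` Dirichlet restriction of `Jcs`, obtained by deleting the
first and last rows and columns. -/
noncomputable def JDcs (n0 : ℕ) (a b : ℕ → ℝ) :
    Matrix (Fin (n0 - 1)) (Fin (n0 - 1)) ℝ :=
  Matrix.of fun i j =>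
    Jcs n0 a b ⟨(i : ℕ) + 1, by have := i.isLt; omega⟩ ⟨(j : ℕ) + 1, by have := j.isLt; omega⟩

/-- The `(n0−1) × 2` interior-to-boundary block `X₀` of `J_cs`: its only nonzero
entries are `X₀(1, 0) = a n0` (first interior row, boundary vertex `0`) and
`X₀(n0−1, n0) = a n0` (last interior row, boundary vertex `n0`). -/
noncomputable def X0mat (n0 : ℕ) (a : ℕ → ℝ) : Matrix (Fin (n0 - 1)) (Fin 2) ℝ :=
  Matrix.of fun i j =>
    if (i : ℕ) = 0 ∧ (j : ℕ) = 0 then a n0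
    else if (i : ℕ) = n0 - 2 ∧ (j : ℕ) = 1 then a n0
    else 0

/-- The `2 × (n0−1)` boundary-to-interior block `X̄₀` of `J_cs`: its only nonzero
entries are `X̄₀(0, 1) = a 1` and `X̄₀(n0, n0−1) = a 1`. -/
noncomputable def Xbar0mat (n0 : ℕ) (a : ℕ → ℝ) : Matrix (Fin 2) (Fin (n0 - 1)) ℝ :=
  Matrix.of fun i j =>
    if (i : ℕ) = 0 ∧ (j : ℕ) = 0 then a 1
    else if (i : ℕ) = 1 ∧ (j : ℕ) = n0 - 2 then a 1
    else 0

/-!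
For a tridiagonal matrix `T` with diagonal `d` and off-diagonals `u`, `l`, every minor that enters
the Schur complement onto the two end vertices is explicit. The determinant of a block of
consecutive indices is a continuant of `d` and `u * l`, which gives the corner entries `(0, 0)` and
`(last, last)` of the adjugate of the interior block; deleting the first column and the last row
(or vice versa) leaves a triangular matrix, which gives the other two corners as products of
off-diagonal entries. The two recursions of the continuant, from the back and from the front,
assemble these corners into
`q⁻¹ • !![p, -∏ (-u i); -∏ (-l i), p']`,
where `q`, `p`, `p'` are the continuants of the interior and of the interior extended by the first,
respectively the last, vertex. If `T` is centrosymmetric then `p' = p`, because a continuant is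
invariant under reversal of its arguments, and `∏ l i = ∏ u i`.
-/

section Continuant

variable {R : Type*} [CommRing R]

/-- The continuant of order `n` of the sequences `d` and `c`: the three-term recurrence satisfied by
the leading principal minors of a tridiagonal matrix with diagonal `d` whose opposite off-diagonal
entries at positions `(i, i + 1)` and `(i + 1, i)` multiply to `c i`. -/
def continuant (d c : ℕ → R) : ℕ → R
  | 0 => 1
  | 1 => d 0
  | n + 2 => d (n + 1) * continuant d c (n + 1) - c n * continuant d c n

theorem continuant_add_two (d c : ℕ → R) (n : ℕ) :
    continuant d c (n + 2) = d (n + 1) * continuant d c (n + 1) - c n * continuant d c n :=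
  rfl

theorem continuant_add_two_eq_front (d c : ℕ → R) (n : ℕ) :
    continuant d c (n + 2) =
      d 0 * continuant (fun i => d (i + 1)) (fun i => c (i + 1)) (n + 1) -
        c 0 * continuant (fun i => d (i + 2)) (fun i => c (i + 2)) n := by
  induction n using Nat.twoStepInduction with
  | zero => simp only [continuant]; ring
  | one => simp only [continuant]; ring
  | more n ih ih' =>
    rw [continuant_add_two, ih, ih']
    simp only [continuant_add_two]
    ring

theorem continuant_eq_of_reverse {d d' c c' : ℕ → R} {n : ℕ}
    (hd : ∀ i j, i + j + 1 = n → d i = d' j) (hc : ∀ i j, i + j + 2 = n → c i = c' j) :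
    continuant d c n = continuant d' c' n := by
  induction n using Nat.twoStepInduction generalizing d' c' with
  | zero => rfl
  | one => exact hd 0 0 rfl
  | more n ih ih' =>
    rw [continuant_add_two_eq_front d', continuant_add_two, hd (n + 1) 0 rfl, hc n 0 rfl,
      ih' (fun i j h => hd i (j + 1) (by omega)) (fun i j h => hc i (j + 1) (by omega)),
      ih (fun i j h => hd i (j + 2) (by omega)) (fun i j h => hc i (j + 2) (by omega))]

theorem eval_eq_continuant {P : ℕ → R[X]} {b c : ℕ → R} {n : ℕ} (h0 : P 0 = 1)
    (h1 : P 1 = X - C (b 0))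
    (h : ∀ k, k + 2 ≤ n → P (k + 2) = (X - C (b (k + 1))) * P (k + 1) - C (c k) * P k)
    (z : R) : ∀ k ≤ n, (P k).eval z = continuant (fun i => z - b i) c k := by
  intro k
  induction k using Nat.twoStepInduction with
  | zero => simp [h0, continuant]
  | one => simp [h1, continuant]
  | more k ih ih' =>
    intro hk
    simp [h k hk, continuant_add_two, ih (by omega), ih' (by omega)]

end Continuant

section Tridiagonal

variable {R : Type*} [CommRing R] (n : ℕ) (d u l : ℕ → R)

/-- The `n × n` tridiagonal matrix with diagonal entries `d i`, entries `u i` at `(i, i + 1)` and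
entries `l i` at `(i + 1, i)`. -/
def tridiagonal : Matrix (Fin n) (Fin n) R :=
  Matrix.of fun i j =>
    if (j : ℕ) = i then d i
    else if (j : ℕ) = i + 1 then u i
    else if (i : ℕ) = j + 1 then l j
    else 0

theorem transpose_tridiagonal : (tridiagonal n d u l).transpose = tridiagonal n d l u := by
  ext i j
  simp only [tridiagonal, Matrix.transpose_apply, Matrix.of_apply]
  split_ifs <;> first | omega | rfl | congr 1

theorem smul_one_sub_tridiagonal (z : R) :
    z • (1 : Matrix (Fin n) (Fin n) R) - tridiagonal n d u l =
      tridiagonal n (fun i => z - d i) (fun i => -u i) (fun i => -l i) := by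
  ext i j
  by_cases h : j = i
  · simp [tridiagonal, h]
  · simp only [tridiagonal, Matrix.sub_apply, Matrix.smul_apply, Matrix.of_apply,
      Matrix.one_apply_ne' h, Fin.val_inj, h, if_false, smul_zero, zero_sub]
    split_ifs <;> simp

theorem tridiagonal_submatrix_succ :
    (tridiagonal (n + 1) d u l).submatrix Fin.succ Fin.succ =
      tridiagonal n (fun i => d (i + 1)) (fun i => u (i + 1)) (fun i => l (i + 1)) := by
  ext i j
  simp [tridiagonal]

theorem tridiagonal_submatrix_castSucc :
    (tridiagonal (n + 1) d u l).submatrix Fin.castSucc Fin.castSucc = tridiagonal n d u l :=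
  rfl

theorem det_tridiagonal_submatrix_succ_succAbove_one :
    ((tridiagonal (n + 2) d u l).submatrix Fin.succ (Fin.succAbove 1)).det =
      l 0 * (tridiagonal n (fun i => d (i + 2)) (fun i => u (i + 2)) (fun i => l (i + 2))).det := by
  set N := (tridiagonal (n + 2) d u l).submatrix Fin.succ (Fin.succAbove 1)
  have entry_zero_zero : N 0 0 = l 0 := by simp [N, tridiagonal]
  have column_zero (i : Fin n) : N i.succ 0 = 0 := by simp [N, tridiagonal]
  have minor_zero_zero : N.submatrix Fin.succ Fin.succ =
      tridiagonal n (fun i => d (i + 2)) (fun i => u (i + 2)) (fun i => l (i + 2)) := by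
    ext i j
    simp [N, tridiagonal]
  rw [Matrix.det_succ_column_zero, Fin.sum_univ_succ]
  simp [entry_zero_zero, column_zero, minor_zero_zero]

theorem det_tridiagonal :
    (tridiagonal n d u l).det = continuant d (fun i => u i * l i) n := by
  induction n using Nat.twoStepInduction generalizing d u l with
  | zero => simp [continuant]
  | one => simp [continuant, tridiagonal]
  | more n ih ih' =>
    have entry_zero_zero : tridiagonal (n + 2) d u l 0 0 = d 0 := by simp [tridiagonal]
    have entry_zero_one : tridiagonal (n + 2) d u l 0 1 = u 0 := by simp [tridiagonal]
    have row_zero (j : Fin n) : tridiagonal (n + 2) d u l 0 j.succ.succ = 0 := by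
      simp [tridiagonal]
    rw [Matrix.det_succ_row_zero, Fin.sum_univ_succ, Fin.sum_univ_succ,
      continuant_add_two_eq_front]
    simp [entry_zero_zero, entry_zero_one, row_zero, tridiagonal_submatrix_succ,
      det_tridiagonal_submatrix_succ_succAbove_one, ih, ih', sub_eq_add_neg, mul_assoc]

theorem det_tridiagonal_submatrix_castSucc_succ :
    ((tridiagonal (n + 1) d u l).submatrix Fin.castSucc Fin.succ).det =
      ∏ i ∈ Finset.range n, u i := by
  rw [Matrix.det_of_isLowerTriangular, ← Fin.prod_univ_eq_prod_range]
  · simp [tridiagonal]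
  · intro i j (hij : i < j)
    rw [Fin.lt_def] at hij
    simp only [tridiagonal, Matrix.submatrix_apply, Matrix.of_apply, Fin.val_castSucc,
      Fin.val_succ]
    split_ifs <;> first | omega | rfl

theorem det_tridiagonal_submatrix_succ_castSucc :
    ((tridiagonal (n + 1) d u l).submatrix Fin.succ Fin.castSucc).det =
      ∏ i ∈ Finset.range n, l i := by
  rw [← Matrix.det_transpose, Matrix.transpose_submatrix, transpose_tridiagonal,
    det_tridiagonal_submatrix_castSucc_succ]

end Tridiagonal

section SubmatrixLemmas

variable {R ι κ τ : Type*} [DecidableEq ι]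

theorem one_submatrix_mul_mul_one_submatrix [NonAssocSemiring R] [Fintype ι] (A : Matrix ι ι R)
    (e : κ → ι) (f : τ → ι) :
    (1 : Matrix ι ι R).submatrix e id * A * (1 : Matrix ι ι R).submatrix id f =
      A.submatrix e f := by
  ext i j
  simp [Matrix.mul_apply, Matrix.one_apply]

theorem smul_one_sub_submatrix [Ring R] [DecidableEq κ] {e : κ → ι} (he : Function.Injective e)
    (z : R) (A : Matrix ι ι R) :
    (z • (1 : Matrix ι ι R) - A).submatrix e e = z • (1 : Matrix κ κ R) - A.submatrix e e := by
  rw [Matrix.submatrix_sub, ← Matrix.submatrix_one e he]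
  rfl

theorem smul_one_sub_submatrix_of_ne [Ring R] {e : κ → ι} {f : τ → ι} (hef : ∀ i j, e i ≠ f j)
    (z : R) (A : Matrix ι ι R) :
    (z • (1 : Matrix ι ι R) - A).submatrix e f = -A.submatrix e f := by
  ext i j
  simp [Matrix.one_apply_ne (hef i j)]

end SubmatrixLemmas

section Indices

/-- The two end vertices `0` and `n` of the path `0, …, n`, used as row or column selector. -/
def endpointIndex (n : ℕ) : Fin 2 → Fin (n + 1) := ![0, Fin.last n]

/-- The inclusion `i ↦ i + 1` of the interior `1, …, m + 1` of the path `0, …, m + 2`, whose end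
vertices are `endpointIndex (m + 2)`. -/
def interiorIndex (m : ℕ) (i : Fin (m + 1)) : Fin (m + 3) := i.succ.castSucc

theorem endpointIndex_injective (n : ℕ) : Function.Injective (endpointIndex (n + 1)) := by
  intro i j h
  fin_cases i <;> fin_cases j <;> simp_all [endpointIndex, Fin.ext_iff]

theorem interiorIndex_injective (m : ℕ) : Function.Injective (interiorIndex m) :=
  (Fin.castSucc_injective _).comp (Fin.succ_injective _)

theorem endpointIndex_ne_interiorIndex (m : ℕ) (i : Fin 2) (j : Fin (m + 1)) :
    endpointIndex (m + 2) i ≠ interiorIndex m j := by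
  have hj := j.isLt
  rw [Ne, Fin.ext_iff]
  fin_cases i
  · exact (Nat.succ_ne_zero j).symm
  · exact Nat.ne_of_gt (Nat.succ_lt_succ hj)

end Indices

section Blocks

variable {R : Type*} [CommRing R] (m : ℕ) (d u l : ℕ → R)

theorem tridiagonal_submatrix_endpointIndex :
    (tridiagonal (m + 3) d u l).submatrix (endpointIndex (m + 2)) (endpointIndex (m + 2)) =
      Matrix.diagonal ![d 0, d (m + 2)] := by
  ext i j
  fin_cases i <;> fin_cases j <;> simp [tridiagonal, endpointIndex]

theorem tridiagonal_submatrix_interiorIndex :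
    (tridiagonal (m + 3) d u l).submatrix (interiorIndex m) (interiorIndex m) =
      tridiagonal (m + 1) (fun i => d (i + 1)) (fun i => u (i + 1)) (fun i => l (i + 1)) := by
  rw [← tridiagonal_submatrix_succ, ← tridiagonal_submatrix_castSucc (m + 2)]
  rfl

theorem tridiagonal_submatrix_endpointIndex_interiorIndex :
    (tridiagonal (m + 3) d u l).submatrix (endpointIndex (m + 2)) (interiorIndex m) =
      Matrix.diagonal ![u 0, l (m + 1)] *
        (1 : Matrix (Fin (m + 1)) (Fin (m + 1)) R).submatrix (endpointIndex m) id := by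
  ext i j
  have hj : (j : ℕ) ≠ m + 1 ∧ (j : ℕ) ≠ m + 2 := by omega
  rw [Matrix.diagonal_mul]
  fin_cases i
  · simp [tridiagonal, endpointIndex, interiorIndex, Matrix.one_apply,
      eq_comm (a := (0 : Fin (m + 1)))]
  · by_cases hm : m = j <;>
      simp [tridiagonal, endpointIndex, interiorIndex, Matrix.one_apply, Fin.ext_iff, hj, hm]

theorem tridiagonal_submatrix_interiorIndex_endpointIndex :
    (tridiagonal (m + 3) d u l).submatrix (interiorIndex m) (endpointIndex (m + 2)) =
      (1 : Matrix (Fin (m + 1)) (Fin (m + 1)) R).submatrix id (endpointIndex m) *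
        Matrix.diagonal ![l 0, u (m + 1)] := by
  rw [← Matrix.transpose_inj, Matrix.transpose_submatrix, transpose_tridiagonal,
    tridiagonal_submatrix_endpointIndex_interiorIndex]
  simp [Matrix.transpose_submatrix]

theorem adjugate_tridiagonal_submatrix_endpointIndex :
    (tridiagonal (m + 1) d u l).adjugate.submatrix (endpointIndex m) (endpointIndex m) =
      !![continuant (fun i => d (i + 1)) (fun i => u (i + 1) * l (i + 1)) m,
          ∏ i ∈ Finset.range m, -u i;
        ∏ i ∈ Finset.range m, -l i, continuant d (fun i => u i * l i) m] := by
  ext i j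
  fin_cases i <;> fin_cases j <;>
    simp [endpointIndex, Matrix.adjugate_fin_succ_eq_det_submatrix, Finset.prod_neg,
      tridiagonal_submatrix_succ, tridiagonal_submatrix_castSucc, det_tridiagonal,
      det_tridiagonal_submatrix_castSucc_succ, det_tridiagonal_submatrix_succ_castSucc]

theorem inv_tridiagonal_submatrix_endpointIndex {K : Type*} [Field K] (d u l : ℕ → K) :
    (tridiagonal (m + 1) d u l)⁻¹.submatrix (endpointIndex m) (endpointIndex m) =
      (continuant d (fun i => u i * l i) (m + 1))⁻¹ •
        !![continuant (fun i => d (i + 1)) (fun i => u (i + 1) * l (i + 1)) m,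
            ∏ i ∈ Finset.range m, -u i;
          ∏ i ∈ Finset.range m, -l i, continuant d (fun i => u i * l i) m] := by
  rw [Matrix.inv_def, det_tridiagonal, Ring.inverse_eq_inv', Matrix.submatrix_smul, Pi.smul_apply,
    Pi.smul_apply, adjugate_tridiagonal_submatrix_endpointIndex]

end Blocks

section SchurComplement

/-- The Schur complement `T_∂∂ - T_∂° * T_°°⁻¹ * T_°∂` of a matrix indexed by the path
`0, …, m + 2`, where `∂` consists of the two end vertices and `°` of the interior ones. -/
noncomputable def endpointSchurComplement {R : Type*} [CommRing R] {m : ℕ}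
    (T : Matrix (Fin (m + 3)) (Fin (m + 3)) R) : Matrix (Fin 2) (Fin 2) R :=
  T.submatrix (endpointIndex (m + 2)) (endpointIndex (m + 2)) -
    T.submatrix (endpointIndex (m + 2)) (interiorIndex m) *
      (T.submatrix (interiorIndex m) (interiorIndex m))⁻¹ *
        T.submatrix (interiorIndex m) (endpointIndex (m + 2))

theorem endpointSchurComplement_smul_one_sub {R : Type*} [CommRing R] {m : ℕ} (z : R)
    (A : Matrix (Fin (m + 3)) (Fin (m + 3)) R) :
    endpointSchurComplement (z • (1 : Matrix (Fin (m + 3)) (Fin (m + 3)) R) - A) =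
      z • (1 : Matrix (Fin 2) (Fin 2) R) -
        A.submatrix (endpointIndex (m + 2)) (endpointIndex (m + 2)) -
        A.submatrix (endpointIndex (m + 2)) (interiorIndex m) *
          (z • (1 : Matrix (Fin (m + 1)) (Fin (m + 1)) R) -
            A.submatrix (interiorIndex m) (interiorIndex m))⁻¹ *
          A.submatrix (interiorIndex m) (endpointIndex (m + 2)) := by
  rw [endpointSchurComplement, smul_one_sub_submatrix (endpointIndex_injective _),
    smul_one_sub_submatrix (interiorIndex_injective _),
    smul_one_sub_submatrix_of_ne (endpointIndex_ne_interiorIndex m),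
    smul_one_sub_submatrix_of_ne fun i j => (endpointIndex_ne_interiorIndex m j i).symm]
  simp only [Matrix.neg_mul, Matrix.mul_neg, neg_neg]

theorem prod_range_add_two_eq_ends_mul {M : Type*} [CommMonoid M] (f : ℕ → M) (m : ℕ) :
    ∏ i ∈ Finset.range (m + 2), f i =
      f 0 * (∏ i ∈ Finset.range m, f (i + 1)) * f (m + 1) := by
  rw [Finset.prod_range_succ, Finset.prod_range_succ', mul_comm (f 0)]

variable {K : Type*} [Field K] {m : ℕ} {d u l : ℕ → K}

theorem endpointSchurComplement_tridiagonal
    (hdet : ((tridiagonal (m + 3) d u l).submatrix (interiorIndex m) (interiorIndex m)).det ≠ 0) :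
    endpointSchurComplement (tridiagonal (m + 3) d u l) =
      (continuant (fun i => d (i + 1)) (fun i => u (i + 1) * l (i + 1)) (m + 1))⁻¹ •
        !![continuant d (fun i => u i * l i) (m + 2), -∏ i ∈ Finset.range (m + 2), -u i;
          -∏ i ∈ Finset.range (m + 2), -l i,
          continuant (fun i => d (i + 1)) (fun i => u (i + 1) * l (i + 1)) (m + 2)] := by
  rw [tridiagonal_submatrix_interiorIndex, det_tridiagonal] at hdet
  have corners : endpointSchurComplement (tridiagonal (m + 3) d u l) =
      Matrix.diagonal ![d 0, d (m + 2)] - Matrix.diagonal ![u 0, l (m + 1)] *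
        (tridiagonal (m + 1) (fun i => d (i + 1)) (fun i => u (i + 1))
          (fun i => l (i + 1)))⁻¹.submatrix (endpointIndex m) (endpointIndex m) *
        Matrix.diagonal ![l 0, u (m + 1)] := by
    rw [endpointSchurComplement, tridiagonal_submatrix_endpointIndex,
      tridiagonal_submatrix_endpointIndex_interiorIndex, tridiagonal_submatrix_interiorIndex,
      tridiagonal_submatrix_interiorIndex_endpointIndex,
      ← one_submatrix_mul_mul_one_submatrix _ (endpointIndex m) (endpointIndex m)]
    simp only [Matrix.mul_assoc]
  rw [corners, inv_tridiagonal_submatrix_endpointIndex, continuant_add_two_eq_front d,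
    continuant_add_two fun i => d (i + 1), prod_range_add_two_eq_ends_mul,
    prod_range_add_two_eq_ends_mul]
  ext i j
  fin_cases i <;> fin_cases j <;> simp [Matrix.diagonal_mul, Matrix.mul_diagonal] <;> field_simp

theorem endpointSchurComplement_tridiagonal_of_centrosymmetric
    (hd : ∀ i j, i + j = m + 2 → d i = d j) (hul : ∀ i j, i + j = m + 1 → u i = l j)
    (hdet : ((tridiagonal (m + 3) d u l).submatrix (interiorIndex m) (interiorIndex m)).det ≠ 0) :
    endpointSchurComplement (tridiagonal (m + 3) d u l) =
      (continuant (fun i => d (i + 1)) (fun i => u (i + 1) * l (i + 1)) (m + 1))⁻¹ •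
        (continuant d (fun i => u i * l i) (m + 2) • (1 : Matrix (Fin 2) (Fin 2) K) -
          (∏ i ∈ Finset.range (m + 2), -u i) • !![0, 1; 1, 0]) := by
  have continuant_shift : continuant (fun i => d (i + 1)) (fun i => u (i + 1) * l (i + 1))
      (m + 2) = continuant d (fun i => u i * l i) (m + 2) :=
    continuant_eq_of_reverse (fun i j h => hd _ _ (by omega)) fun i j h => by
      rw [hul (i + 1) j (by omega), hul j (i + 1) (by omega), mul_comm]
  have prod_eq : ∏ i ∈ Finset.range (m + 2), -l i = ∏ i ∈ Finset.range (m + 2), -u i := by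
    rw [← Finset.prod_range_reflect]
    refine Finset.prod_congr rfl fun i hi => ?_
    have hi : i < m + 2 := Finset.mem_range.mp hi
    rw [hul i (m + 2 - 1 - i) (by omega)]
  rw [endpointSchurComplement_tridiagonal hdet, continuant_shift, prod_eq]
  congr 1
  ext i j
  fin_cases i <;> fin_cases j <;> simp

end SchurComplement

section CentrosymmetricJacobi

variable {K : Type*} [Field K]

/-- The `(n + 1) × (n + 1)` Jacobi matrix `Jcs` over an arbitrary field. It is centrosymmetric when
`b` is palindromic. -/
def centroJacobi (n : ℕ) (a b : ℕ → K) : Matrix (Fin (n + 1)) (Fin (n + 1)) K :=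
  tridiagonal (n + 1) b (fun i => a (i + 1)) (fun i => a (n - i))

theorem statement_7_general (m : ℕ) (a b : ℕ → K)
    (ha : ∀ i, 1 ≤ i → i ≤ m + 2 → a i ≠ 0) (hb : ∀ j, j ≤ m + 2 → b j = b (m + 2 - j))
    (P : ℕ → K[X]) (hP0 : P 0 = 1) (hP1 : P 1 = X - C (b 0))
    (hP : ∀ k, k + 2 ≤ m + 2 →
      P (k + 2) = (X - C (b (k + 1))) * P (k + 1) - C (a (k + 1) * a (m + 2 - k)) * P k)
    (PD : ℕ → K[X]) (hPD0 : PD 0 = 1) (hPD1 : PD 1 = X - C (b 1))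
    (hPD : ∀ k, k + 2 ≤ m + 1 →
      PD (k + 2) = (X - C (b (k + 2))) * PD (k + 1) - C (a (k + 2) * a (m + 1 - k)) * PD k)
    (z : K)
    (hdet : ((z • (1 : Matrix (Fin (m + 3)) (Fin (m + 3)) K) - centroJacobi (m + 2) a b).submatrix
      (interiorIndex m) (interiorIndex m)).det ≠ 0) :
    endpointSchurComplement
        (z • (1 : Matrix (Fin (m + 3)) (Fin (m + 3)) K) - centroJacobi (m + 2) a b) =
      (-(∏ i ∈ Finset.Icc 1 (m + 2), a i) / (PD (m + 1)).eval z) •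
        ((1 - (P (m + 2)).eval z / ∏ i ∈ Finset.Icc 1 (m + 2), a i) •
          (1 : Matrix (Fin 2) (Fin 2) K) - !![1, -1; -1, 1]) := by
  have prod_eq : ∏ i ∈ Finset.range (m + 2), - -a (i + 1) = ∏ i ∈ Finset.Icc 1 (m + 2), a i := by
    simp only [neg_neg]
    rw [Finset.range_eq_Ico, Finset.prod_Ico_add' a, Finset.Ico_add_one_right_eq_Icc, zero_add]
  have prod_ne_zero : ∏ i ∈ Finset.Icc 1 (m + 2), a i ≠ 0 :=
    Finset.prod_ne_zero_iff.mpr fun i hi =>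
      ha i (Finset.mem_Icc.mp hi).1 (Finset.mem_Icc.mp hi).2
  rw [centroJacobi, smul_one_sub_tridiagonal] at hdet ⊢
  rw [endpointSchurComplement_tridiagonal_of_centrosymmetric
    (fun i j h => by rw [hb i (by omega), show m + 2 - i = j by omega])
    (fun i j h => by rw [show m + 2 - j = i + 1 by omega]) hdet, prod_eq,
    eval_eq_continuant hP0 hP1 hP z _ le_rfl,
    eval_eq_continuant (b := fun i => b (i + 1)) hPD0 hPD1 hPD z _ le_rfl]
  simp only [neg_mul_neg]
  ext i j
  fin_cases i <;> fin_cases j <;> simp <;> field_simp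

end CentrosymmetricJacobi

section RealBlocks

variable (m : ℕ) (a b : ℕ → ℝ)

theorem JDcs_eq_submatrix_centroJacobi :
    JDcs (m + 2) a b =
      (centroJacobi (m + 2) a b).submatrix (interiorIndex m) (interiorIndex m) :=
  rfl

theorem X0mat_eq_submatrix_centroJacobi :
    X0mat (m + 2) a =
      (centroJacobi (m + 2) a b).submatrix (interiorIndex m) (endpointIndex (m + 2)) := by
  rw [centroJacobi, tridiagonal_submatrix_interiorIndex_endpointIndex]
  ext i j
  rw [Matrix.mul_diagonal]
  fin_cases j <;>
    simp [X0mat, endpointIndex, Matrix.one_apply, Fin.ext_iff, -Fin.val_eq_zero_iff]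

theorem Xbar0mat_eq_submatrix_centroJacobi :
    Xbar0mat (m + 2) a =
      (centroJacobi (m + 2) a b).submatrix (endpointIndex (m + 2)) (interiorIndex m) := by
  rw [centroJacobi, tridiagonal_submatrix_endpointIndex_interiorIndex]
  ext i j
  rw [Matrix.diagonal_mul]
  fin_cases i <;>
    simp [Xbar0mat, endpointIndex, Matrix.one_apply, Fin.ext_iff, -Fin.val_eq_zero_iff,
      eq_comm (b := (j : ℕ))]

variable {m a b}

theorem centroJacobi_submatrix_endpointIndex (hb : b (m + 2) = b 0) :
    (centroJacobi (m + 2) a b).submatrix (endpointIndex (m + 2)) (endpointIndex (m + 2)) =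
      b 0 • (1 : Matrix (Fin 2) (Fin 2) ℝ) := by
  rw [centroJacobi, tridiagonal_submatrix_endpointIndex, hb, Matrix.smul_one_eq_diagonal]
  congr 1
  ext i
  fin_cases i <;> rfl

theorem endpointSchurComplement_smul_one_sub_centroJacobi (hb : b (m + 2) = b 0) (z : ℝ) :
    endpointSchurComplement
        (z • (1 : Matrix (Fin (m + 3)) (Fin (m + 3)) ℝ) - centroJacobi (m + 2) a b) =
      z • (1 : Matrix (Fin 2) (Fin 2) ℝ) - b 0 • (1 : Matrix (Fin 2) (Fin 2) ℝ) -
        Xbar0mat (m + 2) a *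
          (z • (1 : Matrix (Fin (m + 2 - 1)) (Fin (m + 2 - 1)) ℝ) - JDcs (m + 2) a b)⁻¹ *
          X0mat (m + 2) a := by
  rw [endpointSchurComplement_smul_one_sub, centroJacobi_submatrix_endpointIndex hb,
    JDcs_eq_submatrix_centroJacobi, X0mat_eq_submatrix_centroJacobi m a b,
    Xbar0mat_eq_submatrix_centroJacobi m a b]

end RealBlocks

/-- For `z` with `det(z·I − J^D_cs) ≠ 0`, the Schur complement of
`J_cs` with respect to the boundary/interior decomposition satisfies
`z·I₂ − b(0)·I₂ − X̄₀·(z·I − J^D_cs)⁻¹·X₀ = φ(z)·(R(z)·I₂ − Δ₀)`, where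
`R(z) = 1 − P_{n0}(z)/∏ a(i)`, `φ(z) = −(∏ a(i))/P^D_{n0−1}(z)` and `Δ₀ = !![1,−1;−1,1]`. -/
theorem statement_7 (n0 : ℕ) (hn0 : 2 ≤ n0) (a b : ℕ → ℝ)
    (ha : ∀ i, 1 ≤ i → i ≤ n0 → a i ≠ 0)
    (hb : ∀ j, j ≤ n0 → b j = b (n0 - j))
    (P : ℕ → Polynomial ℝ)
    (hP0 : P 0 = 1) (hP1 : P 1 = X - C (b 0))
    (hP : ∀ k, 2 ≤ k → k ≤ n0 + 1 →
      P k = (X - C (b (k - 1))) * P (k - 1) - C (a (k - 1) * a (n0 + 2 - k)) * P (k - 2))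
    (PD : ℕ → Polynomial ℝ)
    (hPD0 : PD 0 = 1) (hPD1 : PD 1 = X - C (b 1))
    (hPD : ∀ k, 2 ≤ k → k ≤ n0 - 1 →
      PD k = (X - C (b k)) * PD (k - 1) - C (a k * a (n0 + 1 - k)) * PD (k - 2)) :
    ∀ z : ℝ,
      (z • (1 : Matrix (Fin (n0 - 1)) (Fin (n0 - 1)) ℝ) - JDcs n0 a b).det ≠ 0 →
      z • (1 : Matrix (Fin 2) (Fin 2) ℝ) - b 0 • (1 : Matrix (Fin 2) (Fin 2) ℝ) -
          Xbar0mat n0 a * (z • (1 : Matrix (Fin (n0 - 1)) (Fin (n0 - 1)) ℝ) - JDcs n0 a b)⁻¹ *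
            X0mat n0 a =
        (-(∏ i ∈ Finset.Icc 1 n0, a i) / (PD (n0 - 1)).eval z) •
          ((1 - (P n0).eval z / ∏ i ∈ Finset.Icc 1 n0, a i) • (1 : Matrix (Fin 2) (Fin 2) ℝ) -
            !![1, -1; -1, 1]) := by
  intro z hdet
  obtain ⟨m, rfl⟩ := Nat.exists_eq_add_of_le' hn0
  have hb0 : b (m + 2) = b 0 := by simpa using hb (m + 2) le_rfl
  refine (endpointSchurComplement_smul_one_sub_centroJacobi hb0 z).symm.trans
    (statement_7_general m a b ha hb P hP0 hP1 (fun k hk => ?_) PD hPD0 hPD1 (fun k hk => ?_) z ?_)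
  · simpa using hP (k + 2) (by omega) (by omega)
  · simpa using hPD (k + 2) (by omega) (by omega)
  · rwa [smul_one_sub_submatrix (interiorIndex_injective m)]
end

section
/- For every y ∈ (0,2), the equation R(x) = y has exactly n0 distinct real solutions x; in particular the n0 branches of the inverse of the spectral decimation function are defined on (0,2). -/
open Polynomial

/-! The `P k` are the monic orthogonal polynomials of a Jacobi matrix. The Christoffel–Darboux
recursion at non-real points shows that all zeros of `P (n + 1)` are real; at real points it shows
that they are simple and that `P n` has the sign of the derivative of `P (n + 1)` at each of them,
so that `P n` changes sign between consecutive ones. The symmetry of the coefficients forces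
`P n ^ 2` to equal the product of all recurrence coefficients, that is `(∏ a i) ^ 2`, at each zero
of `P (n + 1)`. Hence `P n` runs between `∏ a i` and `-∏ a i` on each of the `n` gaps and takes
every value strictly in between there, which already exhausts its degree. -/

open Set
open scoped ComplexConjugate

theorem exists_mem_Ioo_eq_zero_of_mul_neg {α : Type*} [ConditionallyCompleteLinearOrder α]
    [TopologicalSpace α] [OrderTopology α] [DenselyOrdered α] {f : α → ℝ} {x y : α} (hxy : x ≤ y)
    (hf : ContinuousOn f (Icc x y)) (h : f x * f y < 0) : ∃ z ∈ Ioo x y, f z = 0 := by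
  rcases mul_neg_iff.mp h with ⟨hx, hy⟩ | ⟨hx, hy⟩
  · exact intermediate_value_Ioo' hxy hf ⟨hy, hx⟩
  · exact intermediate_value_Ioo hxy hf ⟨hx, hy⟩

theorem notMem_Ioo_orderEmbOfFin {α : Type*} [LinearOrder α] {S : Finset α} {n : ℕ}
    (hS : S.card = n + 1) (i : Fin n) {z : α} (hz : z ∈ S) :
    z ∉ Ioo (S.orderEmbOfFin hS i.castSucc) (S.orderEmbOfFin hS i.succ) := by
  obtain ⟨j, rfl⟩ : z ∈ range (S.orderEmbOfFin hS) := by rwa [Finset.range_orderEmbOfFin]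
  rintro ⟨hij, hji⟩
  rw [OrderEmbedding.lt_iff_lt] at hij hji
  exact hji.not_ge (Fin.castSucc_lt_iff_succ_le.mp hij)

theorem le_ncard_of_nonempty_inter_Ioo {α : Type*} [LinearOrder α] {n : ℕ}
    {s : Fin (n + 1) → α} (hs : Monotone s) {T : Set α} (hT : T.Finite)
    (h : ∀ i : Fin n, (T ∩ Ioo (s i.castSucc) (s i.succ)).Nonempty) : n ≤ T.ncard := by
  choose t htT ht using h
  have ht_mono : StrictMono t := fun i j hij ↦
    calc t i < s i.succ := (ht i).2
      _ ≤ s j.castSucc := hs (Fin.succ_le_castSucc_iff.mpr hij)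
      _ < t j := (ht j).1
  calc n = (range t).ncard := by
        rw [← image_univ, ncard_image_of_injective _ ht_mono.injective, ncard_univ, Nat.card_fin]
    _ ≤ T.ncard := ncard_le_ncard (range_subset_iff.mpr htT) hT

theorem setOf_eval_eq_coe_roots_toFinset {R : Type*} [CommRing R] [IsDomain R] [DecidableEq R]
    {p : R[X]} {w : R} (hp : p ≠ C w) : {x | p.eval x = w} = (p - C w).roots.toFinset := by
  ext x
  simp [sub_ne_zero.mpr hp, sub_eq_zero]

theorem finite_setOf_eval_eq {R : Type*} [CommRing R] [IsDomain R] {p : R[X]} {w : R}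
    (hp : p ≠ C w) : {x | p.eval x = w}.Finite := by
  classical
  exact setOf_eval_eq_coe_roots_toFinset hp ▸ Finset.finite_toSet _

theorem ncard_setOf_eval_eq_le {R : Type*} [CommRing R] [IsDomain R] {p : R[X]} {w : R}
    (hp : p ≠ C w) : {x | p.eval x = w}.ncard ≤ p.natDegree := by
  classical
  rw [setOf_eval_eq_coe_roots_toFinset hp, ncard_coe_finset, ← natDegree_sub_C (p := p) (a := w)]
  exact (Multiset.toFinset_card_le _).trans (card_roots' _)

/-- Writing `p = (X - x) (X - y) q`, the product of the two derivatives is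
`-(x - y) ^ 2 * q x * q y`, so `q` changes sign. -/
theorem exists_isRoot_mem_Ioo_of_derivative_mul_pos {p : ℝ[X]} {x y : ℝ} (hxy : x < y)
    (hx : p.IsRoot x) (hy : p.IsRoot y)
    (h : 0 < p.derivative.eval x * p.derivative.eval y) : ∃ z ∈ Ioo x y, p.IsRoot z := by
  obtain ⟨q, rfl⟩ : (X - C x) * (X - C y) ∣ p :=
    (isCoprime_X_sub_C_of_isUnit_sub (sub_ne_zero.mpr hxy.ne).isUnit).mul_dvd
      (dvd_iff_isRoot.mpr hx) (dvd_iff_isRoot.mpr hy)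
  have hq : q.eval x * q.eval y < 0 := by
    simp only [derivative_mul, derivative_X_sub_C, eval_add, eval_mul, eval_sub, eval_X, eval_C,
      eval_one] at h
    nlinarith [sq_pos_of_pos (sub_pos.mpr hxy)]
  obtain ⟨z, hz, hqz⟩ := exists_mem_Ioo_eq_zero_of_mul_neg hxy.le q.continuousOn hq
  exact ⟨z, hz, by simp [hqz]⟩

theorem card_roots_toFinset_of_splits {R : Type*} [CommRing R] [IsDomain R] [DecidableEq R]
    {p : R[X]} (hp : p.Splits) (h : ∀ x, p.IsRoot x → p.derivative.eval x ≠ 0) :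
    p.roots.toFinset.card = p.natDegree := by
  have hp0 : p ≠ 0 := by
    rintro rfl
    exact h 0 (by simp) (by simp)
  have hnodup : p.roots.Nodup := Multiset.nodup_iff_count_le_one.mpr fun x ↦ by
    rw [count_roots]
    by_contra! hx
    obtain ⟨hx_root, hx_deriv⟩ := (one_lt_rootMultiplicity_iff_isRoot hp0).mp hx
    exact h x hx_root hx_deriv
  rw [Multiset.toFinset_card_of_nodup hnodup, hp.natDegree_eq_card_roots]

theorem splits_of_forall_im_eq_zero {p : ℝ[X]} (h : ∀ z : ℂ, aeval z p = 0 → z.im = 0) :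
    p.Splits := by
  refine (IsAlgClosed.splits (p.map (algebraMap ℝ ℂ))).of_splits_map _ fun z hz ↦ ?_
  have hz_root : aeval z p = 0 := by
    rw [← eval_map_algebraMap]
    exact isRoot_of_mem_roots hz
  exact ⟨z.re, Complex.ext rfl (h z hz_root).symm⟩

/-- The monic orthogonal polynomials of the Jacobi matrix with diagonal `b 0, b 1, …` and products
of opposite off-diagonal entries `c 0, c 1, …`, defined by their three-term recurrence. -/
noncomputable def jacobiMatrixPoly {R : Type*} [CommRing R] (b c : ℕ → R) : ℕ → R[X]
  | 0 => 1
  | 1 => X - C (b 0)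
  | k + 2 => (X - C (b (k + 1))) * jacobiMatrixPoly b c (k + 1) - C (c k) * jacobiMatrixPoly b c k

namespace jacobiMatrixPoly

section CommRing

variable {R : Type*} [CommRing R] {b c : ℕ → R}

theorem add_two (b c : ℕ → R) (k : ℕ) : jacobiMatrixPoly b c (k + 2) =
    (X - C (b (k + 1))) * jacobiMatrixPoly b c (k + 1) - C (c k) * jacobiMatrixPoly b c k :=
  rfl

theorem eq_of_recurrence {P : ℕ → R[X]} {n : ℕ} (h0 : P 0 = 1) (h1 : P 1 = X - C (b 0))
    (h : ∀ k < n, P (k + 2) = (X - C (b (k + 1))) * P (k + 1) - C (c k) * P k) {k : ℕ}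
    (hk : k ≤ n + 1) : P k = jacobiMatrixPoly b c k := by
  induction k using Nat.twoStepInduction with
  | zero => exact h0
  | one => exact h1
  | more k ih ih' => rw [h k (by lia), ih (by lia), ih' (by lia), add_two]

theorem isMonicOfDegree [Nontrivial R] (b c : ℕ → R) (k : ℕ) :
    IsMonicOfDegree (jacobiMatrixPoly b c k) k := by
  induction k using Nat.twoStepInduction with
  | zero => exact isMonicOfDegree_zero_iff.mpr rfl
  | one => exact isMonicOfDegree_X_sub_one _
  | more k ih ih' =>
    have hmul := (isMonicOfDegree_X_sub_one (b (k + 1))).mul ih'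
    rw [show 1 + (k + 1) = k + 2 by lia] at hmul
    have hdeg : (C (c k) * jacobiMatrixPoly b c k).natDegree < k + 2 :=
      (natDegree_C_mul_le _ _).trans_lt (by rw [ih.natDegree_eq]; lia)
    exact hmul.sub hdeg

theorem wronskian_succ (b c : ℕ → R) (k : ℕ) :
    wronskian (jacobiMatrixPoly b c (k + 1)) (jacobiMatrixPoly b c (k + 2)) =
      jacobiMatrixPoly b c (k + 1) ^ 2 +
        C (c k) * wronskian (jacobiMatrixPoly b c k) (jacobiMatrixPoly b c (k + 1)) := by
  simp only [wronskian, add_two, derivative_sub, derivative_mul, derivative_X, derivative_C]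
  ring

/-- At a zero `x` of `jacobiMatrixPoly b c (n + 1)`, both sides solve, as functions of `k`, the same
three-term recurrence with the same initial values: the left side by running the recurrence
backwards from `n + 1`. -/
theorem eval_reflect_mul_prod {n : ℕ} (hb : ∀ j ≤ n, b j = b (n - j))
    (hc : ∀ j < n, c j = c (n - 1 - j)) {x : R} (hx : (jacobiMatrixPoly b c (n + 1)).IsRoot x)
    {k : ℕ} (hk : k ≤ n) :
    (jacobiMatrixPoly b c (n - k)).eval x * ∏ j ∈ Finset.range k, c j =
      (jacobiMatrixPoly b c n).eval x * (jacobiMatrixPoly b c k).eval x := by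
  induction k using Nat.twoStepInduction with
  | zero => simp [jacobiMatrixPoly]
  | one =>
    obtain ⟨m, rfl⟩ := Nat.exists_eq_add_of_le' hk
    have hb0 : b 0 = b (m + 1) := hb 0 (by lia)
    have hc0 : c 0 = c m := hc 0 (by lia)
    simp only [IsRoot, jacobiMatrixPoly, eval_sub, eval_mul, eval_X, eval_C] at hx
    simp only [Nat.add_sub_cancel, Finset.prod_range_one, jacobiMatrixPoly, eval_sub, eval_X,
      eval_C, hb0, hc0]
    linear_combination -hx
  | more k ih ih' =>
    obtain ⟨m, rfl⟩ := Nat.exists_eq_add_of_le' hk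
    have hbk : b (k + 1) = b (m + 1) := by rw [hb (k + 1) (by lia)]; congr 1; lia
    have hck : c (k + 1) = c m := by rw [hc (k + 1) (by lia)]; congr 1; lia
    have ihk := ih (by lia)
    have ihk' := ih' (by lia)
    rw [show m + (k + 2) - k = m + 2 by lia, add_two] at ihk
    rw [show m + (k + 2) - (k + 1) = m + 1 by lia, Finset.prod_range_succ] at ihk'
    rw [Nat.add_sub_cancel, Finset.prod_range_succ, Finset.prod_range_succ, add_two b c k, hck]
    simp only [eval_sub, eval_mul, eval_X, eval_C, hbk] at ihk ⊢
    linear_combination (x - b (m + 1)) * ihk' - c k * ihk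

theorem eval_sq_eq_prod {n : ℕ} (hb : ∀ j ≤ n, b j = b (n - j))
    (hc : ∀ j < n, c j = c (n - 1 - j)) {x : R} (hx : (jacobiMatrixPoly b c (n + 1)).IsRoot x) :
    (jacobiMatrixPoly b c n).eval x ^ 2 = ∏ j ∈ Finset.range n, c j := by
  simpa [jacobiMatrixPoly, sq] using (eval_reflect_mul_prod hb hc hx le_rfl).symm

end CommRing

section Real

variable {b c : ℕ → ℝ} {n : ℕ}

theorem eval_wronskian_pos (hc : ∀ j < n, 0 < c j) (x : ℝ) :
    0 < (wronskian (jacobiMatrixPoly b c n) (jacobiMatrixPoly b c (n + 1))).eval x := by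
  induction n with
  | zero => simp [wronskian, jacobiMatrixPoly]
  | succ n ih =>
    rw [wronskian_succ, eval_add, eval_pow, eval_mul, eval_C]
    exact add_pos_of_nonneg_of_pos (sq_nonneg _)
      (mul_pos (hc n n.lt_succ_self) (ih fun j hj ↦ hc j (hj.trans n.lt_succ_self)))

theorem eval_mul_eval_derivative_pos (hc : ∀ j < n, 0 < c j) {x : ℝ}
    (hx : (jacobiMatrixPoly b c (n + 1)).IsRoot x) :
    0 < (jacobiMatrixPoly b c n).eval x * (jacobiMatrixPoly b c (n + 1)).derivative.eval x := by
  simpa [wronskian, hx.eq_zero] using eval_wronskian_pos (b := b) hc x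

theorem im_mul_im_aeval_mul_conj_pos (hc : ∀ j < n, 0 < c j) {z : ℂ} (hz : z.im ≠ 0) :
    0 < z.im * (aeval z (jacobiMatrixPoly b c (n + 1)) *
      conj (aeval z (jacobiMatrixPoly b c n))).im := by
  induction n with
  | zero => simpa [jacobiMatrixPoly] using mul_self_pos.mpr hz
  | succ n ih =>
    set u := aeval z (jacobiMatrixPoly b c n)
    set v := aeval z (jacobiMatrixPoly b c (n + 1))
    have hrec : aeval z (jacobiMatrixPoly b c (n + 2)) = (z - b (n + 1)) * v - c n * u := by
      simp [add_two, u, v]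
    have him : z.im * (((z - b (n + 1)) * v - c n * u) * conj v).im =
        z.im ^ 2 * Complex.normSq v + c n * (z.im * (v * conj u).im) := by
      simp only [Complex.mul_im, Complex.mul_re, Complex.sub_im, Complex.sub_re, Complex.conj_re,
        Complex.conj_im, Complex.ofReal_re, Complex.ofReal_im, Complex.normSq_apply]
      ring
    rw [hrec, him]
    exact add_pos_of_nonneg_of_pos (mul_nonneg (sq_nonneg _) (Complex.normSq_nonneg v))
      (mul_pos (hc n n.lt_succ_self) (ih fun j hj ↦ hc j (hj.trans n.lt_succ_self)))

theorem splits_succ (hc : ∀ j < n, 0 < c j) : (jacobiMatrixPoly b c (n + 1)).Splits := by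
  refine splits_of_forall_im_eq_zero fun z hz ↦ ?_
  by_contra him
  simpa [hz] using im_mul_im_aeval_mul_conj_pos (b := b) hc him

theorem card_roots_toFinset_succ (hc : ∀ j < n, 0 < c j) :
    (jacobiMatrixPoly b c (n + 1)).roots.toFinset.card = n + 1 := by
  rw [card_roots_toFinset_of_splits (splits_succ hc) fun x hx ↦
    right_ne_zero_of_mul (eval_mul_eval_derivative_pos hc hx).ne',
    (isMonicOfDegree b c (n + 1)).natDegree_eq]

theorem eval_mul_eval_neg_of_consecutive (hc : ∀ j < n, 0 < c j) {x y : ℝ} (hxy : x < y)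
    (hx : (jacobiMatrixPoly b c (n + 1)).IsRoot x) (hy : (jacobiMatrixPoly b c (n + 1)).IsRoot y)
    (h : ∀ z ∈ Ioo x y, ¬ (jacobiMatrixPoly b c (n + 1)).IsRoot z) :
    (jacobiMatrixPoly b c n).eval x * (jacobiMatrixPoly b c n).eval y < 0 := by
  have hWx := eval_mul_eval_derivative_pos hc hx
  have hWy := eval_mul_eval_derivative_pos hc hy
  by_contra! hPxy
  have hD : 0 < (jacobiMatrixPoly b c (n + 1)).derivative.eval x *
      (jacobiMatrixPoly b c (n + 1)).derivative.eval y := by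
    refine pos_of_mul_pos_right ?_ hPxy
    rw [mul_mul_mul_comm]
    exact mul_pos hWx hWy
  obtain ⟨z, hz, hz_root⟩ := exists_isRoot_mem_Ioo_of_derivative_mul_pos hxy hx hy hD
  exact h z hz hz_root

theorem exists_mem_Ioo_eval_eq (hb : ∀ j ≤ n, b j = b (n - j)) (hc : ∀ j < n, 0 < c j)
    (hc_symm : ∀ j < n, c j = c (n - 1 - j)) {w : ℝ} (hw : w ^ 2 < ∏ j ∈ Finset.range n, c j)
    {x y : ℝ} (hxy : x < y) (hx : (jacobiMatrixPoly b c (n + 1)).IsRoot x)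
    (hy : (jacobiMatrixPoly b c (n + 1)).IsRoot y)
    (h : ∀ z ∈ Ioo x y, ¬ (jacobiMatrixPoly b c (n + 1)).IsRoot z) :
    ∃ z ∈ Ioo x y, (jacobiMatrixPoly b c n).eval z = w := by
  set p := jacobiMatrixPoly b c n
  have hpx : p.eval x ^ 2 = ∏ j ∈ Finset.range n, c j := eval_sq_eq_prod hb hc_symm hx
  have hpy : p.eval y ^ 2 = ∏ j ∈ Finset.range n, c j := eval_sq_eq_prod hb hc_symm hy
  have hneg : p.eval x * p.eval y < 0 := eval_mul_eval_neg_of_consecutive hc hxy hx hy h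
  have hopp : p.eval x = -p.eval y :=
    (sq_eq_sq_iff_eq_or_eq_neg.mp (hpx.trans hpy.symm)).resolve_left fun heq ↦
      hneg.not_ge (heq ▸ mul_self_nonneg _)
  have hsign : (p.eval x - w) * (p.eval y - w) < 0 := by
    rw [hopp]
    linear_combination hw - hpy
  obtain ⟨z, hz, hpz⟩ := exists_mem_Ioo_eq_zero_of_mul_neg hxy.le
    (p.continuousOn.sub continuousOn_const) hsign
  exact ⟨z, hz, sub_eq_zero.mp hpz⟩

theorem ncard_setOf_eval_eq (hb : ∀ j ≤ n, b j = b (n - j)) (hc : ∀ j < n, 0 < c j)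
    (hc_symm : ∀ j < n, c j = c (n - 1 - j)) {w : ℝ} (hw : w ^ 2 < ∏ j ∈ Finset.range n, c j) :
    {x | (jacobiMatrixPoly b c n).eval x = w}.ncard = n := by
  have hmonic := isMonicOfDegree b c (n + 1)
  set s := Finset.orderEmbOfFin _ (card_roots_toFinset_succ (b := b) hc)
  have hs (i) : (jacobiMatrixPoly b c (n + 1)).IsRoot (s i) :=
    isRoot_of_mem_roots (Multiset.mem_toFinset.mp (Finset.orderEmbOfFin_mem _ _ i))
  have hs_consecutive (i : Fin n) (z) (hz : z ∈ Ioo (s i.castSucc) (s i.succ)) :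
      ¬ (jacobiMatrixPoly b c (n + 1)).IsRoot z := fun hz_root ↦
    notMem_Ioo_orderEmbOfFin _ i
      (Multiset.mem_toFinset.mpr ((mem_roots hmonic.ne_zero).mpr hz_root)) hz
  have hne : jacobiMatrixPoly b c n ≠ C w := fun heq ↦
    hw.ne (by simpa [heq] using eval_sq_eq_prod hb hc_symm (hs 0))
  refine le_antisymm ?_ (le_ncard_of_nonempty_inter_Ioo s.monotone (finite_setOf_eval_eq hne) ?_)
  · exact (ncard_setOf_eval_eq_le hne).trans_eq (isMonicOfDegree b c n).natDegree_eq
  · intro i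
    obtain ⟨z, hz, hpz⟩ := exists_mem_Ioo_eval_eq hb hc hc_symm hw
      (s.strictMono i.castSucc_lt_succ) (hs _) (hs _) (hs_consecutive i)
    exact ⟨z, hpz, hz⟩

end Real

end jacobiMatrixPoly

theorem prod_range_mul_reflect_eq_sq {M : Type*} [CommMonoid M] (a : ℕ → M) (n : ℕ) :
    ∏ k ∈ Finset.range n, a (k + 1) * a (n - k) = (∏ i ∈ Finset.Icc 1 n, a i) ^ 2 := by
  have hshift : ∏ k ∈ Finset.range n, a (k + 1) = ∏ i ∈ Finset.Icc 1 n, a i := by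
    rw [Finset.range_eq_Ico, Finset.prod_Ico_add' a 0 n 1, zero_add,
      Finset.Ico_add_one_right_eq_Icc]
  have hreflect : ∏ k ∈ Finset.range n, a (n - k) = ∏ k ∈ Finset.range n, a (k + 1) := by
    rw [← Finset.prod_range_reflect]
    refine Finset.prod_congr rfl fun k hk ↦ ?_
    rw [show n - (n - 1 - k) = k + 1 by grind]
  rw [Finset.prod_mul_distrib, hreflect, hshift, sq]

theorem one_sub_inv_mul_eq_iff {K : Type*} [Field K] {A : K} (hA : A ≠ 0) (u y : K) :
    1 - A⁻¹ * u = y ↔ u = (1 - y) * A := by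
  rw [sub_eq_iff_eq_add', ← sub_eq_iff_eq_add, eq_comm, inv_mul_eq_iff_eq_mul₀ hA, mul_comm]

/-- For every `y ∈ (0, 2)`, the equation `R(x) = y` (where
`R = 1 − (∏ a(i))⁻¹ · P_{n0}` is the spectral decimation function) has exactly `n0`
distinct real solutions. -/
theorem statement_11 (n0 : ℕ) (hn0 : 2 ≤ n0) (a b : ℕ → ℝ)
    (ha : ∀ i, 1 ≤ i → i ≤ n0 → a i ≠ 0)
    (hb : ∀ j, j ≤ n0 → b j = b (n0 - j))
    (hpos : ∀ j, 1 ≤ j → j ≤ n0 → 0 < a j * a (n0 + 1 - j))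
    (P : ℕ → Polynomial ℝ)
    (hP0 : P 0 = 1) (hP1 : P 1 = X - C (b 0))
    (hP : ∀ k, 2 ≤ k → k ≤ n0 + 1 →
      P k = (X - C (b (k - 1))) * P (k - 1) - C (a (k - 1) * a (n0 + 2 - k)) * P (k - 2))
 :
    ∀ y : ℝ, 0 < y → y < 2 →
      Set.ncard {x : ℝ |
        (1 - C (∏ i ∈ Finset.Icc 1 n0, a i)⁻¹ * P n0).eval x = y} = n0 := by
  intro y hy0 hy2
  set c : ℕ → ℝ := fun k ↦ a (k + 1) * a (n0 - k)
  set A := ∏ i ∈ Finset.Icc 1 n0, a i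
  have hA : A ≠ 0 := Finset.prod_ne_zero_iff.mpr fun i hi ↦
    ha i (Finset.mem_Icc.mp hi).1 (Finset.mem_Icc.mp hi).2
  have hc : ∀ k < n0, 0 < c k := fun k hk ↦ by
    simpa [c, Nat.add_sub_add_right] using hpos (k + 1) (by lia) hk
  have hc_symm : ∀ k < n0, c k = c (n0 - 1 - k) := fun k hk ↦ by
    simp only [c]
    rw [mul_comm, show n0 - 1 - k + 1 = n0 - k by lia, show n0 - (n0 - 1 - k) = k + 1 by lia]
  have hPn : P n0 = jacobiMatrixPoly b c n0 :=
    jacobiMatrixPoly.eq_of_recurrence hP0 hP1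
      (fun k hk ↦ by simpa [c, Nat.add_sub_add_right] using hP (k + 2) (by lia) (by lia))
      (Nat.le_succ n0)
  have hw : ((1 - y) * A) ^ 2 < ∏ k ∈ Finset.range n0, c k := by
    rw [prod_range_mul_reflect_eq_sq, mul_pow]
    exact mul_lt_of_lt_one_left (by positivity) ((sq_lt_one_iff_abs_lt_one _).mpr
      (abs_lt.mpr ⟨by linarith, by linarith⟩))
  simpa [hPn, one_sub_inv_mul_eq_iff hA] using jacobiMatrixPoly.ncard_setOf_eval_eq hb hc hc_symm hw
end
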